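/- arXiv:2512.17265 — 2 statements merged into one kernel-verified Lean document; each statement's English description precedes it below -/
import Mathlib

section
/- Let d_0 be the constant-zero function on S₁ × S₂ and define d_n = F(d_{n−1}) for n ≥ 1, where F is the GBSM operator. Then the sequence (d_n) is pointwise nondecreasing, every d_n is bounded above pointwise by R̄/(1−γ), and the pointwise supremum d^{1-2}(s,s') = sup_n d_n(s,s') is a fixed point of F, i.e., F(d^{1-2}) = d^{1-2}. -/
open scoped BigOperators

noncomputable section

/-- The (finite, linear-programming) 1-Wasserstein distance between probability
vectors `P` on `S₁` and `Q` on `S₂` with cost function `d`. -/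
def W1 {S₁ S₂ : Type*} [Fintype S₁] [Fintype S₂]
    (P : S₁ → ℝ) (Q : S₂ → ℝ) (d : S₁ → S₂ → ℝ) : ℝ :=
  sInf { c : ℝ | ∃ lam : S₁ → S₂ → ℝ,
    (∀ i j, 0 ≤ lam i j) ∧ (∀ i, ∑ j, lam i j = P i) ∧
    (∀ j, ∑ i, lam i j = Q j) ∧ c = ∑ i, ∑ j, lam i j * d i j }

/-- A finite Markov decision process (without its discount factor). -/
structure FinMDP (S A : Type*) [Fintype S] [Fintype A] where
  P : S → A → S → ℝ
  R : S → A → ℝ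
  P_nonneg : ∀ s a s', 0 ≤ P s a s'
  P_sum : ∀ s a, ∑ s', P s a s' = 1

variable {S₁ A₁ S₂ A₂ : Type*} [Fintype S₁] [Fintype A₁] [Fintype S₂] [Fintype A₂]

/-- `δ(d)((s,a),(s',a')) = |R₁(s,a) − R₂(s',a')| + γ·W₁(P₁(·|s,a), P₂(·|s',a'); d)` -/
def gbsmDelta (M₁ : FinMDP S₁ A₁) (M₂ : FinMDP S₂ A₂) (γ : ℝ)
    (d : S₁ → S₂ → ℝ) (s : S₁) (a : A₁) (s' : S₂) (a' : A₂) : ℝ :=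
  |M₁.R s a - M₂.R s' a'| + γ * W1 (M₁.P s a) (M₂.P s' a') d

/-- The GBSM operator `F(d)(s,s') = H(X_s, X_{s'}; δ(d))` where `H` is the Hausdorff
metric between the finite sets `X_s = {(s,a)}`, `X_{s'} = {(s',a')}`. -/
def gbsmF (M₁ : FinMDP S₁ A₁) (M₂ : FinMDP S₂ A₂) (γ : ℝ)
    (d : S₁ → S₂ → ℝ) : S₁ → S₂ → ℝ :=
  fun s s' =>
    max (⨆ a : A₁, ⨅ a' : A₂, gbsmDelta M₁ M₂ γ d s a s' a')
        (⨅ a : A₁, ⨆ a' : A₂, gbsmDelta M₁ M₂ γ d s a s' a')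

/-- The GBSM: pointwise supremum of the iterates of `gbsmF` from the zero function. -/
def gbsm (M₁ : FinMDP S₁ A₁) (M₂ : FinMDP S₂ A₂) (γ : ℝ) : S₁ → S₂ → ℝ :=
  fun s s' => ⨆ n : ℕ, (gbsmF M₁ M₂ γ)^[n] (fun _ _ => 0) s s'

/-!
The operator `F` is monotone, and raising `d` by a constant `ε` raises `F d` by at most `γ * ε`:
the cost of a coupling of probability vectors grows by exactly `ε`, and `H` commutes with adding
constants. Blackwell's argument turns these two facts into a `γ`-contraction for the sup norm, so
the iterates from `0` converge to the fixed point given by Banach's theorem. They also increase,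
because `0 ≤ F 0`, so their limit is their supremum. The bound `Rbar / (1 - γ)` is the solution `K`
of `Rbar + γ * K = K`.
-/

/-- `lam` is a coupling of `P` and `Q`, that is, a feasible point of the linear program whose
optimal value is `W1`. The vectors `P` and `Q` need not be normalised. -/
structure IsCoupling (P : S₁ → ℝ) (Q : S₂ → ℝ) (lam : S₁ → S₂ → ℝ) : Prop where
  nonneg : ∀ i j, 0 ≤ lam i j
  sum_right : ∀ i, ∑ j, lam i j = P i
  sum_left : ∀ j, ∑ i, lam i j = Q j

section Wasserstein

variable {P : S₁ → ℝ} {Q : S₂ → ℝ} {lam d d' : S₁ → S₂ → ℝ} {b ε : ℝ}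

theorem isCoupling_mul (hP : P ∈ stdSimplex ℝ S₁) (hQ : Q ∈ stdSimplex ℝ S₂) :
    IsCoupling P Q fun i j => P i * Q j where
  nonneg i j := mul_nonneg (hP.1 i) (hQ.1 j)
  sum_right i := by rw [← Finset.mul_sum, hQ.2, mul_one]
  sum_left j := by rw [← Finset.sum_mul, hP.2, one_mul]

namespace IsCoupling

theorem le_left (h : IsCoupling P Q lam) (i : S₁) (j : S₂) : lam i j ≤ P i :=
  h.sum_right i ▸ Finset.single_le_sum (fun j _ => h.nonneg i j) (Finset.mem_univ j)

theorem neg_sum_mul_abs_le_cost (h : IsCoupling P Q lam) (d : S₁ → S₂ → ℝ) :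
    -∑ i, ∑ j, P i * |d i j| ≤ ∑ i, ∑ j, lam i j * d i j := by
  simp only [← Finset.sum_neg_distrib]
  refine Finset.sum_le_sum fun i _ => Finset.sum_le_sum fun j _ => ?_
  calc -(P i * |d i j|) ≤ -(lam i j * |d i j|) :=
        neg_le_neg (mul_le_mul_of_nonneg_right (h.le_left i j) (abs_nonneg _))
    _ = lam i j * -|d i j| := (mul_neg _ _).symm
    _ ≤ lam i j * d i j := mul_le_mul_of_nonneg_left (neg_abs_le _) (h.nonneg i j)

theorem cost_le_cost_add (h : IsCoupling P Q lam) (hd : ∀ i j, d i j ≤ d' i j + ε) :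
    ∑ i, ∑ j, lam i j * d i j ≤ ∑ i, ∑ j, lam i j * d' i j + (∑ i, P i) * ε :=
  calc ∑ i, ∑ j, lam i j * d i j ≤ ∑ i, ∑ j, lam i j * (d' i j + ε) :=
        Finset.sum_le_sum fun i _ => Finset.sum_le_sum fun j _ =>
          mul_le_mul_of_nonneg_left (hd i j) (h.nonneg i j)
    _ = ∑ i, ∑ j, lam i j * d' i j + (∑ i, P i) * ε := by
        simp only [mul_add, Finset.sum_add_distrib, ← Finset.sum_mul, h.sum_right]

theorem W1_le_cost (h : IsCoupling P Q lam) (d : S₁ → S₂ → ℝ) :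
    W1 P Q d ≤ ∑ i, ∑ j, lam i j * d i j := by
  refine csInf_le ⟨-∑ i, ∑ j, P i * |d i j|, ?_⟩ ⟨lam, h.nonneg, h.sum_right, h.sum_left, rfl⟩
  rintro _ ⟨mu, h_nonneg, h_right, h_left, rfl⟩
  exact neg_sum_mul_abs_le_cost ⟨h_nonneg, h_right, h_left⟩ d

end IsCoupling

theorem le_W1 (hP : P ∈ stdSimplex ℝ S₁) (hQ : Q ∈ stdSimplex ℝ S₂)
    (hb : ∀ lam, IsCoupling P Q lam → b ≤ ∑ i, ∑ j, lam i j * d i j) : b ≤ W1 P Q d := by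
  have h := isCoupling_mul hP hQ
  refine le_csInf ⟨_, _, h.nonneg, h.sum_right, h.sum_left, rfl⟩ ?_
  rintro _ ⟨lam, h_nonneg, h_right, h_left, rfl⟩
  exact hb lam ⟨h_nonneg, h_right, h_left⟩

theorem W1_zero (hP : P ∈ stdSimplex ℝ S₁) (hQ : Q ∈ stdSimplex ℝ S₂) :
    W1 P Q (0 : S₁ → S₂ → ℝ) = 0 :=
  le_antisymm (by simpa using (isCoupling_mul hP hQ).W1_le_cost 0) (le_W1 hP hQ (by simp))

theorem W1_le_W1_add (hP : P ∈ stdSimplex ℝ S₁) (hQ : Q ∈ stdSimplex ℝ S₂)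
    (hd : ∀ i j, d i j ≤ d' i j + ε) : W1 P Q d ≤ W1 P Q d' + ε := by
  rw [← sub_le_iff_le_add]
  refine le_W1 hP hQ fun lam h => ?_
  have hcost := h.cost_le_cost_add hd
  rw [hP.2, one_mul] at hcost
  exact sub_le_iff_le_add.2 ((h.W1_le_cost d).trans hcost)

end Wasserstein

section Hausdorff

variable {X Y : Type*}

/-- The quantity `H(X, Y; c)` of the paper, for finite nonempty `X` and `Y`. Its second term is
`⨅ x, ⨆ y`, in contrast with the `⨆ y, ⨅ x` of the usual Hausdorff distance. -/
def hausdorffCost (c : X → Y → ℝ) : ℝ :=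
  max (⨆ x, ⨅ y, c x y) (⨅ x, ⨆ y, c x y)

theorem hausdorffCost_mono [Finite X] [Finite Y] {c c' : X → Y → ℝ} (h : ∀ x y, c x y ≤ c' x y) :
    hausdorffCost c ≤ hausdorffCost c' :=
  max_le_max
    (ciSup_mono (Set.finite_range _).bddAbove fun x =>
      ciInf_mono (Set.finite_range _).bddBelow (h x))
    (ciInf_mono (Set.finite_range _).bddBelow fun x =>
      ciSup_mono (Set.finite_range _).bddAbove (h x))

variable [Nonempty X] [Nonempty Y]

theorem hausdorffCost_const (b : ℝ) : hausdorffCost (fun (_ : X) (_ : Y) => b) = b := by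
  simp [hausdorffCost]

theorem hausdorffCost_add_const [Finite X] [Finite Y] (c : X → Y → ℝ) (b : ℝ) :
    hausdorffCost (fun x y => c x y + b) = hausdorffCost c + b := by
  simp only [hausdorffCost, ← ciInf_add (Set.finite_range _).bddBelow,
    ← ciSup_add (Set.finite_range _).bddAbove, max_add_add_right]

end Hausdorff

theorem FinMDP.P_mem_stdSimplex (M : FinMDP S₁ A₁) (s : S₁) (a : A₁) :
    M.P s a ∈ stdSimplex ℝ S₁ :=
  ⟨M.P_nonneg s a, M.P_sum s a⟩

section Operator

variable (M₁ : FinMDP S₁ A₁) (M₂ : FinMDP S₂ A₂) {γ Rbar ε : ℝ} {d d' : S₁ → S₂ → ℝ}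

theorem gbsmDelta_zero (γ : ℝ) (s : S₁) (a : A₁) (s' : S₂) (a' : A₂) :
    gbsmDelta M₁ M₂ γ 0 s a s' a' = |M₁.R s a - M₂.R s' a'| := by
  rw [gbsmDelta, W1_zero (M₁.P_mem_stdSimplex s a) (M₂.P_mem_stdSimplex s' a'), mul_zero, add_zero]

theorem gbsmDelta_le_add (hγ0 : 0 ≤ γ) (hd : ∀ i j, d i j ≤ d' i j + ε)
    (s : S₁) (a : A₁) (s' : S₂) (a' : A₂) :
    gbsmDelta M₁ M₂ γ d s a s' a' ≤ gbsmDelta M₁ M₂ γ d' s a s' a' + γ * ε := by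
  rw [gbsmDelta, gbsmDelta, add_assoc, ← mul_add]
  gcongr
  exact W1_le_W1_add (M₁.P_mem_stdSimplex s a) (M₂.P_mem_stdSimplex s' a') hd

theorem gbsmF_eq_hausdorffCost (γ : ℝ) (d : S₁ → S₂ → ℝ) (s : S₁) (s' : S₂) :
    gbsmF M₁ M₂ γ d s s' = hausdorffCost fun a a' => gbsmDelta M₁ M₂ γ d s a s' a' :=
  rfl

theorem gbsmF_zero (γ : ℝ) (s : S₁) (s' : S₂) :
    gbsmF M₁ M₂ γ 0 s s' = hausdorffCost fun a a' => |M₁.R s a - M₂.R s' a'| := by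
  simp only [gbsmF_eq_hausdorffCost, gbsmDelta_zero]

variable [Nonempty A₁] [Nonempty A₂]

theorem gbsmF_zero_nonneg (γ : ℝ) : 0 ≤ gbsmF M₁ M₂ γ 0 := fun s s' => by
  rw [gbsmF_zero]
  exact (hausdorffCost_const 0).ge.trans (hausdorffCost_mono fun _ _ => abs_nonneg _)

theorem gbsmF_zero_le (γ : ℝ) {s : S₁} {s' : S₂}
    (hR : ∀ a a', |M₁.R s a - M₂.R s' a'| ≤ Rbar) : gbsmF M₁ M₂ γ 0 s s' ≤ Rbar := by
  rw [gbsmF_zero]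
  exact (hausdorffCost_mono hR).trans (hausdorffCost_const Rbar).le

theorem gbsmF_le_add (hγ0 : 0 ≤ γ) (hd : ∀ i j, d i j ≤ d' i j + ε) (s : S₁) (s' : S₂) :
    gbsmF M₁ M₂ γ d s s' ≤ gbsmF M₁ M₂ γ d' s s' + γ * ε := by
  rw [gbsmF_eq_hausdorffCost, gbsmF_eq_hausdorffCost, ← hausdorffCost_add_const]
  exact hausdorffCost_mono fun a a' => gbsmDelta_le_add M₁ M₂ hγ0 hd s a s' a'

theorem monotone_gbsmF (hγ0 : 0 ≤ γ) : Monotone (gbsmF M₁ M₂ γ) := fun d d' hd s s' => by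
  simpa using gbsmF_le_add M₁ M₂ hγ0 (ε := 0) (fun i j => by simpa using hd i j) s s'

theorem lipschitzWith_gbsmF (hγ0 : 0 ≤ γ) : LipschitzWith ⟨γ, hγ0⟩ (gbsmF M₁ M₂ γ) := by
  have le_add_dist (d d' : S₁ → S₂ → ℝ) (i : S₁) (j : S₂) : d i j ≤ d' i j + dist d d' :=
    calc d i j ≤ d' i j + dist (d i j) (d' i j) := sub_le_iff_le_add'.1 (le_abs_self _)
      _ ≤ d' i j + dist d d' := by
        gcongr
        exact (dist_le_pi_dist (d i) (d' i) j).trans (dist_le_pi_dist d d' i)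
  have coordinate_lipschitz (s : S₁) (s' : S₂) :
      LipschitzWith ⟨γ, hγ0⟩ fun d => gbsmF M₁ M₂ γ d s s' :=
    .of_le_add_mul _ fun d d' => gbsmF_le_add M₁ M₂ hγ0 (le_add_dist d d') s s'
  refine LipschitzWith.of_dist_le_mul fun d d' => ?_
  have h_nonneg : 0 ≤ γ * dist d d' := mul_nonneg hγ0 dist_nonneg
  exact (dist_pi_le_iff h_nonneg).2 fun s => (dist_pi_le_iff h_nonneg).2 fun s' =>
    (coordinate_lipschitz s s').dist_le_mul d d'

theorem contractingWith_gbsmF (hγ0 : 0 ≤ γ) (hγ1 : γ < 1) :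
    ContractingWith ⟨γ, hγ0⟩ (gbsmF M₁ M₂ γ) :=
  ⟨hγ1, lipschitzWith_gbsmF M₁ M₂ hγ0⟩

theorem monotone_iterate_gbsmF_zero (hγ0 : 0 ≤ γ) : Monotone fun n => (gbsmF M₁ M₂ γ)^[n] 0 :=
  (monotone_gbsmF M₁ M₂ hγ0).monotone_iterate_of_le_map (gbsmF_zero_nonneg M₁ M₂ γ)

theorem iterate_gbsmF_zero_le (hγ0 : 0 ≤ γ) (hγ1 : γ < 1)
    (hR : ∀ s a s' a', |M₁.R s a - M₂.R s' a'| ≤ Rbar) (n : ℕ) (s : S₁) (s' : S₂) :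
    (gbsmF M₁ M₂ γ)^[n] 0 s s' ≤ Rbar / (1 - γ) := by
  have one_sub_pos : 0 < 1 - γ := sub_pos.2 hγ1
  induction n generalizing s s' with
  | zero =>
    have Rbar_nonneg : 0 ≤ Rbar :=
      (gbsmF_zero_nonneg M₁ M₂ γ s s').trans (gbsmF_zero_le M₁ M₂ γ fun a => hR s a s')
    exact div_nonneg Rbar_nonneg one_sub_pos.le
  | succ n ih =>
    rw [Function.iterate_succ_apply']
    calc gbsmF M₁ M₂ γ ((gbsmF M₁ M₂ γ)^[n] 0) s s'
        ≤ gbsmF M₁ M₂ γ 0 s s' + γ * (Rbar / (1 - γ)) :=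
          gbsmF_le_add M₁ M₂ hγ0 (fun i j => (ih i j).trans (zero_add _).ge) s s'
      _ ≤ Rbar + γ * (Rbar / (1 - γ)) := by
          gcongr
          exact gbsmF_zero_le M₁ M₂ γ fun a => hR s a s'
      _ = Rbar / (1 - γ) := by field_simp; ring

theorem gbsm_eq_fixedPoint (hγ0 : 0 ≤ γ) (hγ1 : γ < 1) :
    gbsm M₁ M₂ γ = (contractingWith_gbsmF M₁ M₂ hγ0 hγ1).fixedPoint := by
  funext s s'
  have h_mono : Monotone fun n => (gbsmF M₁ M₂ γ)^[n] 0 s s' :=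
    fun _ _ hmn => monotone_iterate_gbsmF_zero M₁ M₂ hγ0 hmn s s'
  have h_tendsto := (contractingWith_gbsmF M₁ M₂ hγ0 hγ1).tendsto_iterate_fixedPoint 0
  exact (isLUB_of_tendsto_atTop h_mono
    (tendsto_pi_nhds.1 (tendsto_pi_nhds.1 h_tendsto s) s')).ciSup_eq

theorem isFixedPt_gbsm (hγ0 : 0 ≤ γ) (hγ1 : γ < 1) :
    Function.IsFixedPt (gbsmF M₁ M₂ γ) (gbsm M₁ M₂ γ) := by
  rw [gbsm_eq_fixedPoint M₁ M₂ hγ0 hγ1]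
  exact (contractingWith_gbsmF M₁ M₂ hγ0 hγ1).fixedPoint_isFixedPt

end Operator

theorem gbsm_exists_general [Nonempty A₁] [Nonempty A₂]
    (M₁ : FinMDP S₁ A₁) (M₂ : FinMDP S₂ A₂) (γ Rbar : ℝ) (hγ0 : 0 ≤ γ) (hγ1 : γ < 1)
    (hR : ∀ s a s' a', |M₁.R s a - M₂.R s' a'| ≤ Rbar) :
    (∀ (n : ℕ) (s : S₁) (s' : S₂),
        (gbsmF M₁ M₂ γ)^[n] (fun _ _ => 0) s s' ≤
          (gbsmF M₁ M₂ γ)^[n + 1] (fun _ _ => 0) s s') ∧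
    (∀ (n : ℕ) (s : S₁) (s' : S₂),
        (gbsmF M₁ M₂ γ)^[n] (fun _ _ => 0) s s' ≤ Rbar / (1 - γ)) ∧
    gbsmF M₁ M₂ γ (gbsm M₁ M₂ γ) = gbsm M₁ M₂ γ :=
  ⟨fun n => monotone_iterate_gbsmF_zero M₁ M₂ hγ0 n.le_succ,
    iterate_gbsmF_zero_le M₁ M₂ hγ0 hγ1 hR, isFixedPt_gbsm M₁ M₂ hγ0 hγ1⟩

/-- the GBSM iterates from the zero function are pointwise nondecreasing,
uniformly bounded by `R̄/(1−γ)`, and their pointwise supremum is a fixed point of the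
GBSM operator. -/
theorem gbsm_exists
    [Nonempty S₁] [Nonempty A₁] [Nonempty S₂] [Nonempty A₂]
    (M₁ : FinMDP S₁ A₁) (M₂ : FinMDP S₂ A₂) (γ Rbar : ℝ)
    (hγ0 : 0 ≤ γ) (hγ1 : γ < 1) (hRbar : 0 < Rbar)
    (hR₁ : ∀ s a, 0 ≤ M₁.R s a ∧ M₁.R s a ≤ Rbar)
    (hR₂ : ∀ s a, 0 ≤ M₂.R s a ∧ M₂.R s a ≤ Rbar) :
    (∀ (n : ℕ) (s : S₁) (s' : S₂),
        (gbsmF M₁ M₂ γ)^[n] (fun _ _ => 0) s s' ≤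
          (gbsmF M₁ M₂ γ)^[n + 1] (fun _ _ => 0) s s') ∧
    (∀ (n : ℕ) (s : S₁) (s' : S₂),
        (gbsmF M₁ M₂ γ)^[n] (fun _ _ => 0) s s' ≤ Rbar / (1 - γ)) ∧
    gbsmF M₁ M₂ γ (gbsm M₁ M₂ γ) = gbsm M₁ M₂ γ :=
  gbsm_exists_general M₁ M₂ γ Rbar hγ0 hγ1 fun s a s' a' =>
    abs_sub_le_of_nonneg_of_le (hR₁ s a).1 (hR₁ s a).2 (hR₂ s' a').1 (hR₂ s' a').2

end
end

section
/- Let M₁ = ⟨S, A, P₁, R₁, γ⟩ and M₂ = ⟨S, A, P₂, R₂, γ⟩ be finite MDPs sharing the same state space S and action space A, and let d^{1-2} be their GBSM. Define δ_TV((s,a),(s',a')) = |R₁(s,a) − R₂(s',a')| + (γ·R̄/(1−γ))·TV(P₁(·|s,a), P₂(·|s',a')), where TV(P,Q) = (1/2)·Σ_{s∈S} |P(s) − Q(s)|. Then max_{s∈S} d^{1-2}(s,s) ≤ (1/(1−γ))·max_{s∈S} H(X_s, X_s; δ_TV). -/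
/-!
A maximal coupling keeps the common mass `min (P t) (Q t)` in place and transports the remaining
mass, which is the total variation distance. Hence, if `d` is at most `C` everywhere and at most `D`
on the diagonal, `W1 P Q d ≤ C * TV(P, Q) + D`. The iterates defining the GBSM are at most
`C = Rbar / (1 - γ)`, so this turns `γ * W1` into the total variation term of `δ_TV` plus `γ * D`.
Writing `B` for the largest `H(X_s, X_s; δ_TV)`, a diagonal bound `D` thus becomes `B + γ * D`, and
`B / (1 - γ)` is the fixed point of this recursion.
-/

open scoped BigOperators

noncomputable section

variable {S₁ A₁ S₂ A₂ : Type*} [Fintype S₁] [Fintype A₁] [Fintype S₂] [Fintype A₂]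

/-- `δ_TV((s,a),(s',a')) = |R₁(s,a) − R₂(s',a')| + (γ·R̄/(1−γ))·TV(P₁(·|s,a), P₂(·|s',a'))`. -/
def deltaTV {S A : Type*} [Fintype S] [Fintype A]
    (M₁ M₂ : FinMDP S A) (γ Rbar : ℝ) (s : S) (a : A) (s' : S) (a' : A) : ℝ :=
  |M₁.R s a - M₂.R s' a'| +
    γ * Rbar / (1 - γ) * ((1 / 2) * ∑ t, |M₁.P s a t - M₂.P s' a' t|)

section Hausdorff

variable {ι κ : Type*}

/-- The quantity `H(X, Y; c)` for families `X`, `Y` indexed by `ι`, `κ`. Its second term is the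
paper's `min max`, in place of the `⨆ j, ⨅ i, c i j` of the usual Hausdorff distance. -/
def hausdorff (c : ι → κ → ℝ) : ℝ :=
  max (⨆ i, ⨅ j, c i j) (⨅ i, ⨆ j, c i j)

theorem hausdorff_nonneg {c : ι → κ → ℝ} (hc : ∀ i j, 0 ≤ c i j) : 0 ≤ hausdorff c :=
  le_max_of_le_left <| Real.iSup_nonneg fun i => Real.iInf_nonneg (hc i)

theorem hausdorff_const [Nonempty ι] [Nonempty κ] (k : ℝ) :
    hausdorff (fun (_ : ι) (_ : κ) => k) = k := by
  simp only [hausdorff, ciSup_const, ciInf_const, max_self]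

variable [Finite ι] [Finite κ]

theorem hausdorff_mono {c c' : ι → κ → ℝ} (h : ∀ i j, c i j ≤ c' i j) :
    hausdorff c ≤ hausdorff c' :=
  max_le_max
    (ciSup_mono (Set.finite_range _).bddAbove fun i =>
      ciInf_mono (Set.finite_range _).bddBelow (h i))
    (ciInf_mono (Set.finite_range _).bddBelow fun i =>
      ciSup_mono (Set.finite_range _).bddAbove (h i))

theorem hausdorff_add_const [Nonempty ι] [Nonempty κ] (c : ι → κ → ℝ) (k : ℝ) :
    hausdorff (fun i j => c i j + k) = hausdorff c + k := by
  simp only [hausdorff, ← ciSup_add (Set.finite_range _).bddAbove,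
    ← ciInf_add (Set.finite_range _).bddBelow, max_add_add_right]

end Hausdorff

section Coupling

theorem IsCoupling.cost_nonneg {P : S₁ → ℝ} {Q : S₂ → ℝ} {lam d : S₁ → S₂ → ℝ}
    (h : IsCoupling P Q lam) (hd : ∀ i j, 0 ≤ d i j) : 0 ≤ ∑ i, ∑ j, lam i j * d i j :=
  Finset.sum_nonneg fun i _ => Finset.sum_nonneg fun j _ => mul_nonneg (h.nonneg i j) (hd i j)

theorem W1_nonneg (P : S₁ → ℝ) (Q : S₂ → ℝ) {d : S₁ → S₂ → ℝ} (hd : ∀ i j, 0 ≤ d i j) :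
    0 ≤ W1 P Q d := by
  refine Real.sInf_nonneg ?_
  rintro _ ⟨lam, hlam, hright, hleft, rfl⟩
  exact IsCoupling.cost_nonneg ⟨hlam, hright, hleft⟩ hd

namespace IsCoupling

theorem W1_le {P : S₁ → ℝ} {Q : S₂ → ℝ} {lam d : S₁ → S₂ → ℝ} (h : IsCoupling P Q lam)
    (hd : ∀ i j, 0 ≤ d i j) : W1 P Q d ≤ ∑ i, ∑ j, lam i j * d i j := by
  refine csInf_le ⟨0, ?_⟩ ⟨lam, h.nonneg, h.sum_right, h.sum_left, rfl⟩
  rintro _ ⟨lam', hlam', hright, hleft, rfl⟩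
  exact cost_nonneg ⟨hlam', hright, hleft⟩ hd

theorem cost_le {P : S₁ → ℝ} {Q : S₂ → ℝ} {lam d : S₁ → S₂ → ℝ} {C : ℝ}
    (h : IsCoupling P Q lam) (hd : ∀ i j, d i j ≤ C) :
    ∑ i, ∑ j, lam i j * d i j ≤ C * ∑ i, P i :=
  calc ∑ i, ∑ j, lam i j * d i j ≤ ∑ i, ∑ j, lam i j * C := by
        gcongr with i _ j _
        exacts [h.nonneg i j, hd i j]
    _ = C * ∑ i, P i := by simp only [← Finset.sum_mul, h.sum_right, mul_comm C]

theorem add {P P' : S₁ → ℝ} {Q Q' : S₂ → ℝ} {lam lam' : S₁ → S₂ → ℝ}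
    (h : IsCoupling P Q lam) (h' : IsCoupling P' Q' lam') :
    IsCoupling (P + P') (Q + Q') (lam + lam') where
  nonneg i j := add_nonneg (h.nonneg i j) (h'.nonneg i j)
  sum_right i := by
    simp only [Pi.add_apply, Finset.sum_add_distrib, h.sum_right, h'.sum_right]
  sum_left j := by
    simp only [Pi.add_apply, Finset.sum_add_distrib, h.sum_left, h'.sum_left]

theorem diagonal [DecidableEq S₁] {m : S₁ → ℝ} (hm : ∀ i, 0 ≤ m i) :
    IsCoupling m m (fun i j => if i = j then m i else 0) where
  nonneg i j := by
    split_ifs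
    exacts [hm i, le_rfl]
  sum_right i := Fintype.sum_ite_eq i fun _ => m i
  sum_left j := Fintype.sum_ite_eq' j m

-- If both masses vanish, the junk value `x / 0 = 0` yields the zero plan, as it should.
theorem prod {p : S₁ → ℝ} {q : S₂ → ℝ} (hp : ∀ i, 0 ≤ p i) (hq : ∀ j, 0 ≤ q j)
    (hpq : ∑ i, p i = ∑ j, q j) :
    IsCoupling p q (fun i j => p i * q j / ∑ k, p k) where
  nonneg i j := div_nonneg (mul_nonneg (hp i) (hq j)) (Finset.sum_nonneg fun k _ => hp k)
  sum_right i := by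
    rw [← Finset.sum_div, ← Finset.mul_sum, hpq]
    refine mul_div_cancel_of_imp fun hzero => ?_
    exact (Finset.sum_eq_zero_iff_of_nonneg fun k _ => hp k).1 (hpq.trans hzero) i
      (Finset.mem_univ i)
  sum_left j := by
    rw [← Finset.sum_div, ← Finset.sum_mul, mul_comm]
    refine mul_div_cancel_of_imp fun hzero => ?_
    exact (Finset.sum_eq_zero_iff_of_nonneg fun k _ => hq k).1 (hpq.symm.trans hzero) j
      (Finset.mem_univ j)

end IsCoupling

theorem W1_le_mul_sum {p : S₁ → ℝ} {q : S₂ → ℝ} {d : S₁ → S₂ → ℝ} {C : ℝ}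
    (hp : ∀ i, 0 ≤ p i) (hq : ∀ j, 0 ≤ q j) (hpq : ∑ i, p i = ∑ j, q j)
    (hd : ∀ i j, 0 ≤ d i j) (hC : ∀ i j, d i j ≤ C) : W1 p q d ≤ C * ∑ i, p i :=
  have h := IsCoupling.prod hp hq hpq
  (h.W1_le hd).trans (h.cost_le hC)

end Coupling

section TotalVariation

variable {S : Type*} [Fintype S]

/-- The total variation distance of two vectors with the same total mass. -/
def tvDist (P Q : S → ℝ) : ℝ :=
  (1 / 2) * ∑ t, |P t - Q t|

theorem tvDist_nonneg (P Q : S → ℝ) : 0 ≤ tvDist P Q :=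
  mul_nonneg (by norm_num) (Finset.sum_nonneg fun _ _ => abs_nonneg _)

theorem tvDist_comm (P Q : S → ℝ) : tvDist P Q = tvDist Q P := by
  simp only [tvDist, abs_sub_comm]

theorem sum_sub_min_eq_tvDist {P Q : S → ℝ} (hPQ : ∑ t, P t = ∑ t, Q t) :
    ∑ t, (P t - min (P t) (Q t)) = tvDist P Q :=
  calc ∑ t, (P t - min (P t) (Q t))
      = ∑ t, (1 / 2) * (|P t - Q t| + (P t - Q t)) := by
        refine Finset.sum_congr rfl fun t _ => ?_
        linarith [max_sub_min_eq_abs' (P t) (Q t), min_add_max (P t) (Q t)]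
    _ = tvDist P Q := by
        rw [← Finset.mul_sum, Finset.sum_add_distrib, Finset.sum_sub_distrib, hPQ, sub_self,
          add_zero, tvDist]

theorem W1_le_mul_tvDist_add_mul_sum_min {P Q : S → ℝ} {d : S → S → ℝ} {C D : ℝ}
    (hP : ∀ t, 0 ≤ P t) (hQ : ∀ t, 0 ≤ Q t) (hPQ : ∑ t, P t = ∑ t, Q t)
    (hd : ∀ t u, 0 ≤ d t u) (hC : ∀ t u, d t u ≤ C) (hD : ∀ t, d t t ≤ D) :
    W1 P Q d ≤ C * tvDist P Q + D * ∑ t, min (P t) (Q t) := by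
  classical
  set m : S → ℝ := fun t => min (P t) (Q t)
  have hm : ∀ t, 0 ≤ m t := fun t => le_min (hP t) (hQ t)
  have hPm : ∑ t, (P - m) t = tvDist P Q := sum_sub_min_eq_tvDist hPQ
  have hQm : ∑ t, (Q - m) t = tvDist P Q := by
    simpa only [m, Pi.sub_apply, min_comm, tvDist_comm] using sum_sub_min_eq_tvDist hPQ.symm
  have hexcess := IsCoupling.prod (p := P - m) (q := Q - m)
    (fun t => sub_nonneg.2 (min_le_left _ _)) (fun t => sub_nonneg.2 (min_le_right _ _))
    (hPm.trans hQm.symm)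
  have hmaximal := hexcess.add (IsCoupling.diagonal hm)
  rw [sub_add_cancel, sub_add_cancel] at hmaximal
  have hstay : ∑ t, ∑ u, (if t = u then m t else 0) * d t u ≤ D * ∑ t, m t := by
    simp only [ite_mul, zero_mul, Fintype.sum_ite_eq]
    rw [mul_comm D, Finset.sum_mul]
    exact Finset.sum_le_sum fun t _ => mul_le_mul_of_nonneg_left (hD t) (hm t)
  have hmove := (hexcess.cost_le hC).trans_eq (congrArg (C * ·) hPm)
  refine (hmaximal.W1_le hd).trans ?_
  simp only [Pi.add_apply, add_mul, Finset.sum_add_distrib]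
  exact add_le_add hmove hstay

end TotalVariation

theorem add_mul_div_one_sub {K : Type*} [Field K] {x : K} (hx : x ≠ 1) (b : K) :
    b + x * (b / (1 - x)) = b / (1 - x) := by
  have : 1 - x ≠ 0 := sub_ne_zero.2 hx.symm
  field_simp
  ring

section Iterates

/-- The `n`-th iterate `d_n` in the definition of the GBSM. -/
def gbsmIter (M₁ : FinMDP S₁ A₁) (M₂ : FinMDP S₂ A₂) (γ : ℝ) (n : ℕ) : S₁ → S₂ → ℝ :=
  (gbsmF M₁ M₂ γ)^[n] fun _ _ => 0

variable {M₁ : FinMDP S₁ A₁} {M₂ : FinMDP S₂ A₂} {γ : ℝ}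

theorem gbsmIter_succ (n : ℕ) (s : S₁) (s' : S₂) :
    gbsmIter M₁ M₂ γ (n + 1) s s' =
      hausdorff fun a a' => gbsmDelta M₁ M₂ γ (gbsmIter M₁ M₂ γ n) s a s' a' := by
  rw [gbsmIter, Function.iterate_succ_apply']
  rfl

theorem gbsmDelta_nonneg (hγ0 : 0 ≤ γ) {d : S₁ → S₂ → ℝ} (hd : ∀ s s', 0 ≤ d s s')
    (s : S₁) (a : A₁) (s' : S₂) (a' : A₂) : 0 ≤ gbsmDelta M₁ M₂ γ d s a s' a' :=
  add_nonneg (abs_nonneg _) (mul_nonneg hγ0 (W1_nonneg _ _ hd))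

theorem gbsmIter_nonneg (hγ0 : 0 ≤ γ) (n : ℕ) (s : S₁) (s' : S₂) :
    0 ≤ gbsmIter M₁ M₂ γ n s s' := by
  induction n generalizing s s' with
  | zero => exact le_rfl
  | succ n ih =>
    rw [gbsmIter_succ]
    exact hausdorff_nonneg fun a a' => gbsmDelta_nonneg hγ0 ih s a s' a'

theorem gbsmIter_le [Nonempty A₁] [Nonempty A₂] {r : ℝ} (hγ0 : 0 ≤ γ) (hγ1 : γ < 1)
    (hR : ∀ s a s' a', |M₁.R s a - M₂.R s' a'| ≤ r) (n : ℕ) (s : S₁) (s' : S₂) :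
    gbsmIter M₁ M₂ γ n s s' ≤ r / (1 - γ) := by
  induction n generalizing s s' with
  | zero =>
    have hr : 0 ≤ r :=
      (abs_nonneg _).trans (hR s (Classical.arbitrary A₁) s' (Classical.arbitrary A₂))
    exact div_nonneg hr (sub_nonneg.2 hγ1.le)
  | succ n ih =>
    have hW1 (a : A₁) (a' : A₂) :
        W1 (M₁.P s a) (M₂.P s' a') (gbsmIter M₁ M₂ γ n) ≤ r / (1 - γ) := by
      simpa only [M₁.P_sum, mul_one] using
        W1_le_mul_sum (M₁.P_nonneg s a) (M₂.P_nonneg s' a')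
          ((M₁.P_sum s a).trans (M₂.P_sum s' a').symm) (gbsmIter_nonneg hγ0 n) ih
    calc gbsmIter M₁ M₂ γ (n + 1) s s'
        = hausdorff fun a a' => gbsmDelta M₁ M₂ γ (gbsmIter M₁ M₂ γ n) s a s' a' :=
          gbsmIter_succ n s s'
      _ ≤ hausdorff fun (_ : A₁) (_ : A₂) => r + γ * (r / (1 - γ)) :=
          hausdorff_mono fun a a' =>
            add_le_add (hR s a s' a') (mul_le_mul_of_nonneg_left (hW1 a a') hγ0)
      _ = r / (1 - γ) := by rw [hausdorff_const, add_mul_div_one_sub hγ1.ne]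

end Iterates

section CommonStateSpace

variable {S : Type*} [Fintype S] {M₁ : FinMDP S A₁} {M₂ : FinMDP S A₂} {γ r B : ℝ}

/-- `δ_TV` for MDPs that share the state space but may have different action spaces; for equal
action spaces it unfolds to `deltaTV`. -/
def gbsmDeltaTV (M₁ : FinMDP S A₁) (M₂ : FinMDP S A₂) (γ r : ℝ)
    (s : S) (a : A₁) (s' : S) (a' : A₂) : ℝ :=
  |M₁.R s a - M₂.R s' a'| + γ * r / (1 - γ) * tvDist (M₁.P s a) (M₂.P s' a')

theorem gbsmDeltaTV_nonneg (hγ0 : 0 ≤ γ) (hγ1 : γ < 1) (hr : 0 ≤ r)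
    (s : S) (a : A₁) (s' : S) (a' : A₂) : 0 ≤ gbsmDeltaTV M₁ M₂ γ r s a s' a' :=
  add_nonneg (abs_nonneg _) <|
    mul_nonneg (div_nonneg (mul_nonneg hγ0 hr) (sub_nonneg.2 hγ1.le)) (tvDist_nonneg _ _)

theorem gbsmDelta_le_gbsmDeltaTV_add {d : S → S → ℝ} {D : ℝ} (hγ0 : 0 ≤ γ)
    (hd : ∀ t u, 0 ≤ d t u) (hC : ∀ t u, d t u ≤ r / (1 - γ)) (hD : ∀ t, d t t ≤ D)
    (s : S) (a : A₁) (s' : S) (a' : A₂) :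
    gbsmDelta M₁ M₂ γ d s a s' a' ≤ gbsmDeltaTV M₁ M₂ γ r s a s' a' + γ * D := by
  have hD0 : 0 ≤ D := (hd s s).trans (hD s)
  have hoverlap : ∑ t, min (M₁.P s a t) (M₂.P s' a' t) ≤ 1 :=
    (Finset.sum_le_sum fun t _ => min_le_left _ _).trans_eq (M₁.P_sum s a)
  have hW1 : W1 (M₁.P s a) (M₂.P s' a') d ≤
      r / (1 - γ) * tvDist (M₁.P s a) (M₂.P s' a') + D :=
    (W1_le_mul_tvDist_add_mul_sum_min (M₁.P_nonneg s a) (M₂.P_nonneg s' a')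
      ((M₁.P_sum s a).trans (M₂.P_sum s' a').symm) hd hC hD).trans <|
      add_le_add_right (mul_le_of_le_one_right hD0 hoverlap) _
  calc gbsmDelta M₁ M₂ γ d s a s' a'
      ≤ |M₁.R s a - M₂.R s' a'| +
          γ * (r / (1 - γ) * tvDist (M₁.P s a) (M₂.P s' a') + D) :=
        add_le_add_right (mul_le_mul_of_nonneg_left hW1 hγ0) _
    _ = gbsmDeltaTV M₁ M₂ γ r s a s' a' + γ * D := by
        rw [gbsmDeltaTV]
        ring

theorem gbsmIter_self_le [Nonempty A₁] [Nonempty A₂] (hγ0 : 0 ≤ γ) (hγ1 : γ < 1)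
    (hR : ∀ s a s' a', |M₁.R s a - M₂.R s' a'| ≤ r)
    (hB : ∀ s, hausdorff (fun a a' => gbsmDeltaTV M₁ M₂ γ r s a s a') ≤ B) (n : ℕ) (s : S) :
    gbsmIter M₁ M₂ γ n s s ≤ B / (1 - γ) := by
  have hr : 0 ≤ r :=
    (abs_nonneg _).trans (hR s (Classical.arbitrary A₁) s (Classical.arbitrary A₂))
  have hB0 : 0 ≤ B :=
    (hausdorff_nonneg fun a a' => gbsmDeltaTV_nonneg hγ0 hγ1 hr s a s a').trans (hB s)
  have hD0 : 0 ≤ B / (1 - γ) := div_nonneg hB0 (sub_nonneg.2 hγ1.le)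
  induction n generalizing s with
  | zero => exact hD0
  | succ n ih =>
    calc gbsmIter M₁ M₂ γ (n + 1) s s
        = hausdorff fun a a' => gbsmDelta M₁ M₂ γ (gbsmIter M₁ M₂ γ n) s a s a' :=
          gbsmIter_succ n s s
      _ ≤ hausdorff fun a a' => gbsmDeltaTV M₁ M₂ γ r s a s a' + γ * (B / (1 - γ)) :=
          hausdorff_mono fun a a' => gbsmDelta_le_gbsmDeltaTV_add hγ0
            (gbsmIter_nonneg hγ0 n) (gbsmIter_le hγ0 hγ1 hR n) ih s a s a'
      _ = hausdorff (fun a a' => gbsmDeltaTV M₁ M₂ γ r s a s a') + γ * (B / (1 - γ)) :=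
          hausdorff_add_const _ _
      _ ≤ B / (1 - γ) := (add_le_add_left (hB s) _).trans_eq (add_mul_div_one_sub hγ1.ne B)

end CommonStateSpace

theorem gbsm_tv_bound_general {S A₁ A₂ : Type*} [Fintype S] [Nonempty S]
    [Fintype A₁] [Nonempty A₁] [Fintype A₂] [Nonempty A₂]
    (M₁ : FinMDP S A₁) (M₂ : FinMDP S A₂) (γ Rbar : ℝ) (hγ0 : 0 ≤ γ) (hγ1 : γ < 1)
    (hR : ∀ s a s' a', |M₁.R s a - M₂.R s' a'| ≤ Rbar) :
    (⨆ s, gbsm M₁ M₂ γ s s) ≤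
      (1 / (1 - γ)) * ⨆ s, hausdorff fun a a' => gbsmDeltaTV M₁ M₂ γ Rbar s a s a' := by
  rw [one_div_mul_eq_div]
  exact ciSup_le fun s => ciSup_le fun n =>
    gbsmIter_self_le hγ0 hγ1 hR (le_ciSup (Set.finite_range _).bddAbove) n s

/-- distance bound on identical spaces. -/
theorem gbsm_tv_bound {S A : Type*} [Fintype S] [Nonempty S] [Fintype A] [Nonempty A]
    (M₁ M₂ : FinMDP S A) (γ Rbar : ℝ)
    (hγ0 : 0 ≤ γ) (hγ1 : γ < 1) (hRbar : 0 < Rbar)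
    (hR₁ : ∀ s a, 0 ≤ M₁.R s a ∧ M₁.R s a ≤ Rbar)
    (hR₂ : ∀ s a, 0 ≤ M₂.R s a ∧ M₂.R s a ≤ Rbar) :
    (⨆ s : S, gbsm M₁ M₂ γ s s) ≤
      (1 / (1 - γ)) *
        ⨆ s : S,
          max (⨆ a : A, ⨅ a' : A, deltaTV M₁ M₂ γ Rbar s a s a')
              (⨅ a : A, ⨆ a' : A, deltaTV M₁ M₂ γ Rbar s a s a') :=
  gbsm_tv_bound_general M₁ M₂ γ Rbar hγ0 hγ1 fun s a s' a' =>
    abs_sub_le_of_nonneg_of_le (hR₁ s a).1 (hR₁ s a).2 (hR₂ s' a').1 (hR₂ s' a').2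

end
end
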